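/- The number of plus irreducible 321-avoiding permutations of length n for n = 0,1,...,10 is 1, 1, 1, 2, 4, 9, 21, 51, 127, 323, 835. -/

import Mathlib

def Avoids321 {n : ℕ} (π : Equiv.Perm (Fin n)) : Prop :=
  ¬ ∃ i j k : Fin n, i < j ∧ j < k ∧ π k < π j ∧ π j < π i

/-- `π` is plus irreducible: no position `i` has `π (i+1) = π i + 1`. -/
def PlusIrr {n : ℕ} (π : Equiv.Perm (Fin n)) : Prop :=
  ¬ ∃ i : ℕ, ∃ h : i + 1 < n,
    (π ⟨i + 1, h⟩ : ℕ) = (π ⟨i, Nat.lt_of_succ_lt h⟩ : ℕ) + 1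

/-- One step of the left-to-right generation: `a` may follow a prefix with (strict) record `m` and
forbidden value `q`, the unused values being `rem`. -/
def okStep (m q : ℕ) (rem : List ℕ) (a : ℕ) : Bool :=
  !(Nat.beq a q) && (Nat.ble m a || rem.all (fun b => Nat.ble a b))

/-- All admissible completions of a prefix. -/
def gen : ℕ → ℕ → ℕ → List ℕ → List (List ℕ)
  | 0, _, _, _ => [[]]
  | f + 1, m, q, rem => rem.flatMap fun a =>
      if okStep m q rem a = true then
        (gen f (max m a) (a + 1) (rem.erase a)).map (fun l => a :: l) else []

/-- Recursive form of the two conditions. -/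
def GoodL : ℕ → ℕ → List ℕ → Prop
  | _, _, [] => True
  | m, q, a :: l => a ≠ q ∧ (a < m → ∀ b ∈ l, a ≤ b) ∧ GoodL (max m a) (a + 1) l

theorem okStep_iff (m q : ℕ) (rem : List ℕ) (a : ℕ) :
    okStep m q rem a = true ↔ a ≠ q ∧ (a < m → ∀ b ∈ rem, a ≤ b) := by
  simp only [okStep, Bool.and_eq_true, Bool.or_eq_true, List.all_eq_true, Nat.ble_eq,
    Bool.not_eq_true', ← Bool.not_eq_true, Nat.beq_eq]
  constructor
  · rintro ⟨h, h1⟩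
    refine ⟨h, fun h2 => h1.resolve_left (by omega)⟩
  · rintro ⟨h, h1⟩
    refine ⟨h, ?_⟩
    by_cases h2 : m ≤ a
    · exact Or.inl h2
    · exact Or.inr (h1 (by omega))

theorem mem_gen (f : ℕ) : ∀ (m q : ℕ) (rem l : List ℕ), rem.length = f →
    (l ∈ gen f m q rem ↔ l.Perm rem ∧ GoodL m q l) := by
  induction f with
  | zero =>
    intro m q rem l h
    have : rem = [] := List.length_eq_zero_iff.mp h
    subst this
    simp only [gen, List.mem_singleton, List.perm_nil]
    constructor
    · rintro rfl
      exact ⟨rfl, trivial⟩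
    · exact fun h => h.1
  | succ f ih =>
    intro m q rem l h
    simp only [gen, List.mem_flatMap]
    constructor
    · rintro ⟨a, ha, hl⟩
      split_ifs at hl with hok
      · obtain ⟨t, ht, rfl⟩ := List.mem_map.mp hl
        rw [ih _ _ _ _ (by rw [List.length_erase_of_mem ha, h]; rfl)] at ht
        rw [okStep_iff] at hok
        have hp : (a :: t).Perm rem := (ht.1.cons a).trans (List.perm_cons_erase ha).symm
        refine ⟨hp, hok.1, fun h1 b hb => hok.2 h1 b (hp.subset (List.mem_cons_of_mem _ hb)), ht.2⟩
      · simp at hl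
    · rintro ⟨hp, hg⟩
      cases l with
      | nil => rw [List.nil_perm] at hp; subst hp; simp at h
      | cons a t =>
        have ha : a ∈ rem := hp.subset List.mem_cons_self
        refine ⟨a, ha, ?_⟩
        have hok : okStep m q rem a = true := by
          rw [okStep_iff]
          refine ⟨hg.1, fun h1 b hb => ?_⟩
          rcases List.mem_cons.mp (hp.symm.subset hb) with rfl | hb
          · exact le_rfl
          · exact hg.2.1 h1 b hb
        rw [if_pos hok]
        refine List.mem_map.mpr ⟨t, ?_, rfl⟩
        rw [ih _ _ _ _ (by rw [List.length_erase_of_mem ha, h]; rfl)]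
        exact ⟨(List.cons_perm_iff_perm_erase.mp hp).2, hg.2.2⟩

theorem nodup_gen (f : ℕ) : ∀ (m q : ℕ) (rem : List ℕ), rem.Nodup → (gen f m q rem).Nodup := by
  induction f with
  | zero => intro m q rem _; simp [gen]
  | succ f ih =>
    intro m q rem h
    rw [gen, List.nodup_flatMap]
    constructor
    · intro a _
      split_ifs
      · exact (ih _ _ _ (h.erase a)).map (fun x y hxy => (List.cons.inj hxy).2)
      · exact List.nodup_nil
    · refine List.Pairwise.imp ?_ h
      intro a b hab
      simp only [Function.onFun]
      intro l h1 h2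
      split_ifs at h1 <;> split_ifs at h2 <;> simp at h1 h2
      obtain ⟨_, _, rfl⟩ := h1
      obtain ⟨_, _, h3⟩ := h2
      exact hab (List.cons.inj h3).1.symm

/-- Index form of the conditions. -/
theorem goodL_iff (l : List ℕ) : ∀ m q : ℕ, GoodL m q l ↔
    (∀ h : 0 < l.length, l[0] ≠ q) ∧
    (∀ i, ∀ h : i + 1 < l.length, l[i + 1] ≠ l[i] + 1) ∧
    (∀ i j, ∀ hij : i < j, ∀ hj : j < l.length, l[i] < m → l[i] ≤ l[j]) ∧
    (∀ i j k, ∀ hij : i < j, ∀ hjk : j < k, ∀ hk : k < l.length,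
      l[j] < l[i] → l[j] ≤ l[k]) := by
  induction l with
  | nil => intro m q; simp [GoodL]
  | cons a t ih =>
    intro m q
    rw [GoodL, ih]
    constructor
    · rintro ⟨h1, h2, h3, h4, h5, h6⟩
      refine ⟨fun _ => h1, ?_, ?_, ?_⟩
      · rintro (_ | i) h
        · exact h3 (by simpa using h)
        · exact h4 i (by simpa using h)
      · rintro (_ | i) (_ | j) hij hj hm
        · omega
        · exact h2 hm _ (List.getElem_mem _)
        · omega
        · exact h5 i j (by omega) (by simpa using hj) (lt_max_of_lt_left hm)
      · rintro (_ | i) (_ | j) (_ | k) hij hjk hk hm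
        any_goals omega
        · exact h5 j k (by omega) (by simpa using hk) (lt_max_of_lt_right hm)
        · exact h6 i j k (by omega) (by omega) (by simpa using hk) hm
    · rintro ⟨h1, h2, h3, h4⟩
      refine ⟨h1 (by simp), ?_, ?_, ?_, ?_, ?_⟩
      · intro hm b hb
        obtain ⟨j, hj, rfl⟩ := List.getElem_of_mem hb
        exact h3 0 (j + 1) (by omega) (by simpa using hj) hm
      · intro h
        exact h2 0 (by simpa using h)
      · intro i h
        exact h2 (i + 1) (by simpa using h)
      · intro i j hij hj hm
        rcases lt_max_iff.mp hm with hm | hm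
        · exact h3 (i + 1) (j + 1) (by omega) (by simpa using hj) hm
        · exact h4 0 (i + 1) (j + 1) (by omega) (by omega) (by simpa using hj) hm
      · intro i j k hij hjk hk hm
        exact h4 (i + 1) (j + 1) (k + 1) (by omega) (by omega) (by simpa using hk) hm

/-- One-line notation. -/
def word {n : ℕ} (π : Equiv.Perm (Fin n)) : List ℕ := List.ofFn (fun i => (π i : ℕ))

theorem word_injective (n : ℕ) : Function.Injective (word (n := n)) := by
  intro π σ h
  have := List.ofFn_injective h
  ext i
  exact congrFun this i

theorem word_perm {n : ℕ} (π : Equiv.Perm (Fin n)) : (word π).Perm (List.range n) := by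
  rw [List.perm_ext_iff_of_nodup]
  · intro a
    simp only [word, List.mem_ofFn, List.mem_range]
    constructor
    · rintro ⟨i, rfl⟩
      exact (π i).2
    · intro h
      exact ⟨π.symm ⟨a, h⟩, by simp⟩
  · rw [word, List.nodup_ofFn]
    intro i j h
    exact π.injective (Fin.ext h)
  · exact List.nodup_range

theorem exists_word {n : ℕ} (l : List ℕ) (h : l.Perm (List.range n)) :
    ∃ π : Equiv.Perm (Fin n), word π = l := by
  have hl : l.length = n := by simpa using h.length_eq
  subst hl
  have hb : ∀ i : Fin l.length, l[i] < l.length := fun i =>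
    List.mem_range.mp (h.subset (List.getElem_mem i.2))
  have hn : l.Nodup := h.nodup_iff.mpr List.nodup_range
  have hi : Function.Injective (fun i : Fin l.length => (⟨l[i], hb i⟩ : Fin l.length)) := by
    intro i j hij
    have := Fin.mk.inj hij
    exact Fin.ext ((hn.getElem_inj_iff).mp this)
  refine ⟨Equiv.ofBijective _ (Finite.injective_iff_bijective.mp hi), ?_⟩
  simp [word]

theorem good_word {n : ℕ} (π : Equiv.Perm (Fin n)) :
    GoodL 0 n (word π) ↔ Avoids321 π ∧ PlusIrr π := by
  have hlen : (word π).length = n := by simp [word]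
  have hget : ∀ i (h : i < (word π).length), (word π)[i] = (π ⟨i, hlen ▸ h⟩ : ℕ) := by
    intro i h; simp [word]
  rw [goodL_iff]
  simp only [hget, Avoids321, PlusIrr]
  constructor
  · rintro ⟨_, h2, _, h4⟩
    refine ⟨?_, ?_⟩
    · rintro ⟨i, j, k, hij, hjk, h5, h6⟩
      have := h4 i j k hij hjk (by rw [hlen]; exact k.2) h6
      exact absurd h5 (not_lt.mpr this)
    · rintro ⟨i, h, he⟩
      exact h2 i (by rw [hlen]; exact h) he
  · rintro ⟨h1, h2⟩
    refine ⟨fun h => (π _).2.ne, ?_, ?_, ?_⟩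
    · intro i h he
      exact h2 ⟨i, hlen ▸ h, he⟩
    · intro i j _ _ h
      omega
    · intro i j k hij hjk hk h
      by_contra hc
      exact h1 ⟨⟨i, by omega⟩, ⟨j, by omega⟩, ⟨k, by omega⟩, hij, hjk, not_le.mp hc, h⟩

theorem card_eq (n : ℕ) : Nat.card {π : Equiv.Perm (Fin n) // Avoids321 π ∧ PlusIrr π} =
    (gen n 0 n (List.range n)).length := by
  have himg : Set.image word {π : Equiv.Perm (Fin n) | Avoids321 π ∧ PlusIrr π} =
      ((gen n 0 n (List.range n)).toFinset : Set (List ℕ)) := by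
    ext l
    rw [Finset.mem_coe, List.mem_toFinset, mem_gen n 0 n _ _ List.length_range]
    constructor
    · rintro ⟨π, hπ, rfl⟩
      exact ⟨word_perm π, (good_word π).mpr hπ⟩
    · rintro ⟨hp, hg⟩
      obtain ⟨π, rfl⟩ := exists_word l hp
      exact ⟨π, (good_word π).mp hg, rfl⟩
  have h := Set.ncard_image_of_injective {π : Equiv.Perm (Fin n) | Avoids321 π ∧ PlusIrr π}
    (word_injective n)
  rw [himg, Set.ncard_coe_finset,
    List.toFinset_card_of_nodup (nodup_gen n 0 n _ List.nodup_range)] at h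
  rw [h]
  rfl

/-- `withForced l k = k l`, but the spine of `l` is evaluated first. -/
def withForced (l : List ℕ) : (List ℕ → ℕ) → ℕ :=
  List.rec (fun k => k []) (fun a _ ih k => ih (fun t => k (a :: t))) l

theorem withForced_eq (l : List ℕ) : ∀ k : List ℕ → ℕ, withForced l k = k l := by
  induction l with
  | nil => intro k; rfl
  | cons a t ih => intro k; exact ih _

/-- Counting version of `gen`, cheaper to evaluate. -/
def cnt : ℕ → ℕ → ℕ → List ℕ → ℕ
  | 0, _, _, _ => 1
  | f + 1, m, q, rem => rem.foldr (fun a s =>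
      bif okStep m q rem a then
        Nat.add (withForced (rem.filter fun b => !(Nat.beq b a)) fun r =>
          bif Nat.ble m a then cnt f a (Nat.succ a) r else cnt f m (Nat.succ a) r) s
      else s) 0

theorem gen_length (f : ℕ) : ∀ (m q : ℕ) (rem : List ℕ), rem.Nodup →
    (gen f m q rem).length = cnt f m q rem := by
  induction f with
  | zero => intro m q rem _; rfl
  | succ f ih =>
    intro m q rem h
    rw [gen, cnt]
    have key : ∀ L : List ℕ, (L.flatMap fun a => if okStep m q rem a = true then
        (gen f (max m a) (a + 1) (rem.erase a)).map (fun l => a :: l) else []).length =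
        L.foldr (fun a s =>
      bif okStep m q rem a then
        Nat.add (withForced (rem.filter fun b => !(Nat.beq b a)) fun r =>
          bif Nat.ble m a then cnt f a (Nat.succ a) r else cnt f m (Nat.succ a) r) s
      else s) 0 := by
      intro L
      induction L with
      | nil => rfl
      | cons a L ihL =>
        rw [List.flatMap_cons, List.length_append, ihL, List.foldr_cons]
        have hf : (rem.filter fun b => !(Nat.beq b a)) = rem.erase a := by
          rw [h.erase_eq_filter]
          refine List.filter_congr fun b _ => ?_
          rw [Bool.eq_iff_iff]
          simp [← Bool.not_eq_true, Nat.beq_eq]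
        rw [hf, withForced_eq]
        cases hok : okStep m q rem a with
        | false => simp
        | true =>
          simp only [if_true, cond_true, List.length_map, ih _ _ _ (h.erase a), Nat.add_eq,
            Nat.succ_eq_add_one]
          congr 1
          cases hb : Nat.ble m a with
          | true => rw [cond_true, max_eq_right (Nat.le_of_ble_eq_true hb)]
          | false =>
            have : ¬ m ≤ a := fun h => by rw [Nat.ble_eq.mpr h] at hb; cases hb
            rw [cond_false, max_eq_left (by omega)]
    exact key rem

theorem cnt_values : (List.range 11).map (fun n => cnt n 0 n (List.range n)) =
    [1, 1, 1, 2, 4, 9, 21, 51, 127, 323, 835] := by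
  decide +kernel

/-- The number of plus irreducible 321-avoiding permutations of length
`n = 0, 1, ..., 10` is `1, 1, 1, 2, 4, 9, 21, 51, 127, 323, 835`. -/
theorem plusIrr_avoids321_counts :
    (List.range 11).map
        (fun n => Nat.card {π : Equiv.Perm (Fin n) // Avoids321 π ∧ PlusIrr π}) =
      [1, 1, 1, 2, 4, 9, 21, 51, 127, 323, 835] := by
  simp only [card_eq, gen_length _ _ _ _ List.nodup_range]
  exact cnt_values
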